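/- arXiv:2602.23970 — 3 statements merged into one kernel-verified Lean document; each statement's English description precedes it below -/
import Mathlib

section
/- Let w be a weight on ℕ. Then the w-adjacency operator A_w is self-adjoint and its operator norm satisfies ‖A_w‖ = |w|. -/
noncomputable section

/-- The Hilbert space `𝔥 = ℓ²(Γ)` with `Γ = Finset ℕ`. -/
abbrev H : Type := lp (fun _ : Finset ℕ => ℂ) 2

/-- The canonical orthonormal basis vector `Z_σ`. -/
noncomputable def Z (σ : Finset ℕ) : H := lp.single 2 σ (1 : ℂ)

theorem Z_coe (σ τ : Finset ℕ) : (Z σ : H) τ = if τ = σ then 1 else 0 := by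
  simp [Z, Pi.single_apply]

theorem inner_Z (σ : Finset ℕ) (f : H) : inner ℂ (Z σ) f = f σ := by
  simp [Z, lp.inner_single_left]

theorem ext_Z (S T : H →L[ℂ] H) (h : ∀ σ, S (Z σ) = T (Z σ)) : S = T := by
  ext1 f
  have hf := lp.hasSum_single (p := 2) (by simp) f
  have h1 := hf.mapL S
  have h2 := hf.mapL T
  have key : ∀ σ, (lp.single 2 σ (f σ) : H) = f σ • Z σ := by
    intro σ
    rw [Z, ← lp.single_smul]
    simp
  simp only [key, map_smul, h] at h1 h2
  exact h1.unique h2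

theorem symm_symm (σ : Finset ℕ) (k : ℕ) : symmDiff (symmDiff σ {k}) {k} = σ := by
  rw [symmDiff_assoc]; simp

theorem Xi_adj (k : ℕ) (X : H →L[ℂ] H) (hX : ∀ σ, X (Z σ) = Z (symmDiff σ {k})) :
    star X = X := by
  apply ext_Z
  intro σ
  ext τ
  rw [← inner_Z, ContinuousLinearMap.star_eq_adjoint, ContinuousLinearMap.adjoint_inner_right,
    hX, hX, inner_Z, Z_coe, Z_coe]
  congr 1
  apply propext
  constructor
  · rintro rfl
    rw [symm_symm]
  · rintro rfl
    rw [symm_symm]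

theorem Xi_norm (k : ℕ) (X : H →L[ℂ] H) (hX : ∀ σ, X (Z σ) = Z (symmDiff σ {k})) :
    ‖X‖ ≤ 1 := by
  have h1 : X * X = 1 := by
    apply ext_Z
    intro σ
    simp [hX, symm_symm]
  have h2 : ‖star X * X‖ = ‖X‖ * ‖X‖ := ContinuousLinearMap.norm_adjoint_comp_self X
  rw [Xi_adj k X hX, h1] at h2
  have h3 : ‖(1 : H →L[ℂ] H)‖ ≤ 1 := ContinuousLinearMap.norm_id_le
  nlinarith [norm_nonneg X]

def testV (n : ℕ) : H := ∑ σ ∈ (Finset.range n).powerset, Z σ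

theorem testV_ne (n : ℕ) : testV n ≠ 0 := by
  intro h
  have h1 : inner ℂ (Z ∅) (testV n) = 1 := by
    simp [testV, inner_sum, inner_Z, Z_coe]
  rw [h] at h1
  simp at h1

theorem Xi_testV (n k : ℕ) (hk : k < n) (X : H →L[ℂ] H)
    (hX : ∀ σ, X (Z σ) = Z (symmDiff σ {k})) : X (testV n) = testV n := by
  have hm : ∀ σ ∈ (Finset.range n).powerset, symmDiff σ {k} ∈ (Finset.range n).powerset := by
    intro σ hσ
    rw [Finset.mem_powerset] at *
    intro x hx
    rw [Finset.mem_symmDiff] at hx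
    rcases hx with hx | hx
    · exact hσ hx.1
    · have := Finset.mem_singleton.1 hx.1
      simpa [this] using hk
  simp only [testV, map_sum, hX]
  exact Finset.sum_nbij' (fun σ => symmDiff σ {k}) (fun σ => symmDiff σ {k}) hm hm
    (fun σ _ => symm_symm σ k) (fun σ _ => symm_symm σ k) (fun _ _ => rfl)

/-- Theorem 2.1: for a weight `w` on `ℕ`, the `w`-adjacency operator `A_w` is
self-adjoint and `‖A_w‖ = |w| = Σ_k w(k)`. -/
theorem adjacency_selfAdjoint_norm
    (w : ℕ → ℝ) (hw_pos : ∀ k, 0 < w k) (hw_sum : Summable w)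
    (Xi : ℕ → H →L[ℂ] H)
    (hXi : ∀ k σ, Xi k (Z σ) = Z (symmDiff σ {k}))
    (A : H →L[ℂ] H) (hA : A = ∑' k, (w k : ℂ) • Xi k) :
    IsSelfAdjoint A ∧ ‖A‖ = ∑' k, w k := by
  have hb : ∀ k, ‖(w k : ℂ) • Xi k‖ ≤ w k := by
    intro k
    rw [norm_smul, Complex.norm_real, Real.norm_of_nonneg (hw_pos k).le]
    exact mul_le_of_le_one_right (hw_pos k).le (Xi_norm k _ (hXi k))
  have hs : Summable fun k => (w k : ℂ) • Xi k := Summable.of_norm_bounded hw_sum hb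
  have hsum : HasSum (fun k => (w k : ℂ) • Xi k) A := hA ▸ hs.hasSum
  refine ⟨?_, le_antisymm ?_ ?_⟩
  · have h2 := hsum.star
    have e : (fun k => star ((w k : ℂ) • Xi k)) = fun k => (w k : ℂ) • Xi k := by
      funext k
      rw [star_smul, Xi_adj k _ (hXi k)]
      simp
    rw [e] at h2
    exact h2.unique hsum
  · rw [hA]
    exact tsum_of_norm_bounded hw_sum.hasSum hb
  · refine le_of_tendsto_of_tendsto' hw_sum.hasSum.tendsto_sum_nat
      hsum.tendsto_sum_nat.norm ?_
    intro n
    have hv : 0 < ‖testV n‖ := norm_pos_iff.2 (testV_ne n)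
    have h1 : (∑ k ∈ Finset.range n, (w k : ℂ) • Xi k) (testV n)
        = ((∑ k ∈ Finset.range n, w k : ℝ) : ℂ) • testV n := by
      rw [ContinuousLinearMap.sum_apply, Complex.ofReal_sum, Finset.sum_smul]
      refine Finset.sum_congr rfl fun k hk => ?_
      rw [ContinuousLinearMap.smul_apply, Xi_testV n k (Finset.mem_range.1 hk) _ (hXi k)]
    have h2 := (∑ k ∈ Finset.range n, (w k : ℂ) • Xi k).le_opNorm (testV n)
    rw [h1, norm_smul, Complex.norm_real] at h2
    exact (le_abs_self _).trans (le_of_mul_le_mul_right h2 hv)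
end
end

section
/- Let σ ∈ Γ. Then there exists a sequence (u_n)_{n≥1} of unit vectors in 𝔥 such that for every n ≥ 1 and every k ∈ {0, 1, ..., n}, Ξ_k u_n = ε_σ(k) • u_n, where ε_σ(k) := 2·1_σ(k) − 1 (that is, ε_σ(k) = 1 if k ∈ σ and ε_σ(k) = −1 if k ∉ σ). -/
noncomputable section

lemma c_symmDiff (e : ℕ → ℂ) (he : ∀ k, e k * e k = 1) (τ : Finset ℕ) (k : ℕ) :
    ∏ j ∈ symmDiff τ {k}, e j = e k * ∏ j ∈ τ, e j := by
  by_cases hk : k ∈ τ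
  · have h : symmDiff τ {k} = τ.erase k := by
      ext x; simp only [Finset.mem_symmDiff, Finset.mem_singleton, Finset.mem_erase]; grind
    rw [h, ← Finset.mul_prod_erase τ e hk, ← mul_assoc, he, one_mul]
  · have h : symmDiff τ {k} = insert k τ := by
      ext x; simp only [Finset.mem_symmDiff, Finset.mem_singleton, Finset.mem_insert]; grind
    rw [h, Finset.prod_insert hk]

lemma exists_joint_eigenvector (Xi : ℕ → H →L[ℂ] H)
    (hXi : ∀ k σ, Xi k (Z σ) = Z (symmDiff σ {k}))
    (e : ℕ → ℂ) (he : ∀ k, e k * e k = 1) (n : ℕ) :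
    ∃ v : H, v ≠ 0 ∧ ∀ k ≤ n, Xi k v = e k • v := by
  refine ⟨∑ τ ∈ (Finset.range (n + 1)).powerset, (∏ j ∈ τ, e j) • Z τ, ?_, ?_⟩
  · intro h
    have h1 := congrArg (fun v : H => (v : Finset ℕ → ℂ) ∅) h
    dsimp only at h1
    rw [lp.coeFn_sum] at h1
    erw [Finset.sum_apply] at h1
    rw [Finset.sum_eq_single ∅] at h1
    · simp [Z] at h1
    · intro τ _ hτ
      rw [lp.coeFn_smul, Pi.smul_apply, Z, lp.single_apply_ne 2 τ _ hτ.symm, smul_zero]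
    · simp
  · intro k hk
    rw [map_sum, Finset.smul_sum]
    have hmem : ∀ τ ∈ (Finset.range (n + 1)).powerset,
        symmDiff τ {k} ∈ (Finset.range (n + 1)).powerset := by
      intro τ hτ
      rw [Finset.mem_powerset] at hτ ⊢
      intro x hx
      rw [Finset.mem_symmDiff, Finset.mem_singleton] at hx
      rcases hx with hx | hx
      · exact hτ hx.1
      · rw [Finset.mem_range]; omega
    refine Finset.sum_nbij' (fun τ => symmDiff τ {k}) (fun τ => symmDiff τ {k}) hmem hmem
      (fun τ _ => symmDiff_symmDiff_cancel_right _ _)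
      (fun τ _ => symmDiff_symmDiff_cancel_right _ _) ?_
    intro τ _
    rw [map_smul, hXi, c_symmDiff e he, smul_smul, ← mul_assoc, he, one_mul]

/-- Proposition 3.1: for `σ ∈ Γ`, there is a sequence `(u_n)_{n ≥ 1}` of unit vectors
such that `Ξ_k u_n = ε_σ(k) u_n` for all `n ≥ 1` and `k ∈ {0, ..., n}`, where
`ε_σ(k) = 1` if `k ∈ σ` and `ε_σ(k) = -1` otherwise. -/
theorem exists_approx_eigenvectors
    (Xi : ℕ → H →L[ℂ] H)
    (hXi : ∀ k σ, Xi k (Z σ) = Z (symmDiff σ {k}))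
    (σ : Finset ℕ) :
    ∃ u : ℕ → H, ∀ n : ℕ, 1 ≤ n →
      ‖u n‖ = 1 ∧ ∀ k : ℕ, k ≤ n →
        Xi k (u n) = (if k ∈ σ then (1 : ℂ) else -1) • u n := by
  choose v hv0 hv using exists_joint_eigenvector Xi hXi
    (fun k => if k ∈ σ then (1 : ℂ) else -1) (fun k => by split_ifs <;> norm_num)
  refine ⟨fun n => ((‖v n‖ : ℂ)⁻¹) • v n, fun n _ => ⟨?_, fun k hk => ?_⟩⟩
  · exact norm_smul_inv_norm (hv0 n)
  · rw [map_smul, hv n k hk, smul_comm]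
end
end

section
/- Let w be a weight on ℕ. Then the spectrum of A_w satisfies closure{2·μ_w(σ) − |w| : σ ⊆ ℕ} ⊆ spec(A_w) ⊆ [−|w|, |w|] (real sets regarded as subsets of ℂ). Moreover, if w is ideal, then spec(A_w) = [−|w|, |w|]. -/
noncomputable section

open Filter Topology

def tog (k : ℕ) : Finset ℕ ≃ Finset ℕ where
  toFun σ := symmDiff σ {k}
  invFun σ := symmDiff σ {k}
  left_inv σ := by simp
  right_inv σ := by simp

lemma Z_apply (σ τ : Finset ℕ) : (Z σ : ∀ _ : Finset ℕ, ℂ) τ = if τ = σ then 1 else 0 := by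
  unfold Z
  by_cases h : τ = σ
  · subst h; simp
  · simp [h]

lemma hasSum_Z (f : H) : HasSum (fun σ => f σ • Z σ) f := by
  have h := lp.hasSum_single (E := fun _ : Finset ℕ => ℂ) (p := 2) (by simp) f
  convert h using 2 with σ
  unfold Z
  rw [← lp.single_smul]
  simp

lemma Xi_apply (T : H →L[ℂ] H) (k : ℕ) (hT : ∀ σ, T (Z σ) = Z (symmDiff σ {k})) (f : H)
    (σ : Finset ℕ) : (T f : ∀ _ : Finset ℕ, ℂ) σ = f (tog k σ) := by
  have h1 := (hasSum_Z f).mapL T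
  have h2 := h1.mapL (lp.evalCLM ℂ (fun _ : Finset ℕ => ℂ) 2 σ)
  refine h2.unique ?_
  have h3 : ∀ τ, (lp.evalCLM ℂ (fun _ : Finset ℕ => ℂ) 2 σ) (T (f τ • Z τ))
      = if τ = tog k σ then f τ else 0 := by
    intro τ
    rw [map_smul, hT, map_smul]
    change f τ • (Z (symmDiff τ {k}) : ∀ _ : Finset ℕ, ℂ) σ = _
    rw [Z_apply]
    have : σ = symmDiff τ {k} ↔ τ = tog k σ := by
      change σ = tog k τ ↔ τ = tog k σ
      constructor
      · rintro rfl; exact ((tog k).left_inv τ).symm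
      · rintro rfl; exact ((tog k).left_inv σ).symm
    simp [this]
  simp only [h3]
  have := hasSum_ite_eq (tog k σ) (f (tog k σ))
  have h4 : (fun τ => if τ = tog k σ then f τ else 0)
      = fun τ => if τ = tog k σ then f (tog k σ) else 0 := by
    funext τ
    split_ifs with h
    · rw [h]
    · rfl
  rw [h4]
  exact this

lemma Xi_norm_s8 (T : H →L[ℂ] H) (k : ℕ) (hT : ∀ σ, T (Z σ) = Z (symmDiff σ {k})) (f : H) :
    ‖T f‖ = ‖f‖ := by
  rw [lp.norm_eq_tsum_rpow (by simp), lp.norm_eq_tsum_rpow (by simp)]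
  congr 1
  simp only [Xi_apply T k hT]
  exact (tog k).tsum_eq (fun σ => ‖f σ‖ ^ (ENNReal.toReal 2))

lemma Xi_symm (T : H →L[ℂ] H) (k : ℕ) (hT : ∀ σ, T (Z σ) = Z (symmDiff σ {k})) :
    IsSelfAdjoint T := by
  rw [ContinuousLinearMap.isSelfAdjoint_iff_isSymmetric]
  intro f g
  change inner ℂ (T f) g = inner ℂ f (T g)
  rw [lp.inner_eq_tsum, lp.inner_eq_tsum]
  simp only [Xi_apply T k hT]
  rw [← (tog k).tsum_eq]
  congr 1
  ext σ
  congr 2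
  exact congrArg f ((tog k).left_inv σ)

/-- approximate eigenvectors -/
def vv (Xi : ℕ → H →L[ℂ] H) (e : ℕ → ℂ) : ℕ → H
  | 0 => Z ∅
  | n + 1 => vv Xi e n + e n • Xi n (vv Xi e n)

lemma vv_zero (Xi : ℕ → H →L[ℂ] H) (hXi : ∀ k σ, Xi k (Z σ) = Z (symmDiff σ {k}))
    (e : ℕ → ℂ) (n : ℕ) : ∀ σ : Finset ℕ, (∃ k ∈ σ, n ≤ k) → vv Xi e n σ = 0 := by
  induction n with
  | zero =>
    rintro σ ⟨k, hk, -⟩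
    change (Z ∅ : ∀ _ : Finset ℕ, ℂ) σ = 0
    rw [Z_apply, if_neg]
    rintro rfl
    simp at hk
  | succ n ih =>
    rintro σ ⟨k, hk, hn⟩
    change (vv Xi e n σ + e n • (Xi n (vv Xi e n) : ∀ _ : Finset ℕ, ℂ) σ) = 0
    rw [Xi_apply _ n (hXi n), ih σ ⟨k, hk, by omega⟩, ih (tog n σ) ⟨k, ?_, by omega⟩]
    · simp
    · change k ∈ symmDiff σ {n}
      rw [Finset.mem_symmDiff]
      left
      exact ⟨hk, by simp; omega⟩

lemma vv_one (Xi : ℕ → H →L[ℂ] H) (hXi : ∀ k σ, Xi k (Z σ) = Z (symmDiff σ {k}))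
    (e : ℕ → ℂ) (n : ℕ) : vv Xi e n ∅ = 1 := by
  induction n with
  | zero =>
    change (Z ∅ : ∀ _ : Finset ℕ, ℂ) ∅ = 1
    simp [Z_apply]
  | succ n ih =>
    change (vv Xi e n ∅ + e n • (Xi n (vv Xi e n) : ∀ _ : Finset ℕ, ℂ) ∅) = 1
    rw [Xi_apply _ n (hXi n), ih, vv_zero Xi hXi e n (tog n ∅) ⟨n, by simp [tog, Finset.mem_symmDiff], le_rfl⟩]
    simp

lemma Xi_sq (Xi : ℕ → H →L[ℂ] H) (hXi : ∀ k σ, Xi k (Z σ) = Z (symmDiff σ {k}))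
    (k : ℕ) (f : H) : Xi k (Xi k f) = f := by
  apply lp.ext
  funext σ
  rw [Xi_apply _ k (hXi k), Xi_apply _ k (hXi k)]
  exact congrArg f ((tog k).left_inv σ)

lemma Xi_comm (Xi : ℕ → H →L[ℂ] H) (hXi : ∀ k σ, Xi k (Z σ) = Z (symmDiff σ {k}))
    (k l : ℕ) (f : H) : Xi k (Xi l f) = Xi l (Xi k f) := by
  apply lp.ext
  funext σ
  rw [Xi_apply _ k (hXi k), Xi_apply _ l (hXi l), Xi_apply _ l (hXi l), Xi_apply _ k (hXi k)]
  exact congrArg f (symmDiff_right_comm _ _ _)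

lemma vv_eig (Xi : ℕ → H →L[ℂ] H) (hXi : ∀ k σ, Xi k (Z σ) = Z (symmDiff σ {k}))
    (e : ℕ → ℂ) (he : ∀ k, e k * e k = 1) (n : ℕ) :
    ∀ k < n, Xi k (vv Xi e n) = e k • vv Xi e n := by
  induction n with
  | zero => intro k hk; omega
  | succ n ih =>
    intro k hk
    change Xi k (vv Xi e n + e n • Xi n (vv Xi e n)) = e k • (vv Xi e n + e n • Xi n (vv Xi e n))
    rcases Nat.lt_succ_iff_lt_or_eq.1 hk with h | rfl
    · rw [map_add, map_smul, Xi_comm Xi hXi k n, ih k h, map_smul, smul_add, smul_comm (e n)]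
    · rw [map_add, map_smul, Xi_sq Xi hXi, smul_add, smul_smul, he, one_smul, add_comm]

lemma mem_spec (w : ℕ → ℝ) (hw_pos : ∀ k, 0 < w k) (hw_sum : Summable w)
    (Xi : ℕ → H →L[ℂ] H) (hXi : ∀ k σ, Xi k (Z σ) = Z (symmDiff σ {k}))
    (A : H →L[ℂ] H) (hA : HasSum (fun k => (w k : ℂ) • Xi k) A)
    (e : ℕ → ℂ) (he : ∀ k, e k * e k = 1) (he1 : ∀ k, ‖e k‖ = 1) (z : ℂ)
    (hz : HasSum (fun k => (w k : ℂ) * e k) z) : z ∈ spectrum ℂ A := by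
  rw [spectrum.mem_iff]
  rintro ⟨u, hu⟩
  set B : H →L[ℂ] H := (↑u⁻¹ : H →L[ℂ] H) with hB
  have key : ∀ n, 1 ≤ ‖B‖ * (2 * ∑' k, w (k + n)) := by
    intro n
    set v := vv Xi e n with hv
    have hv0 : 0 < ‖v‖ := by
      rw [norm_pos_iff]
      intro h
      have := vv_one Xi hXi e n
      rw [← hv, h] at this
      simp at this
    have hs : HasSum (fun k => (w k : ℂ) • (e k • v - Xi k v)) (z • v - A v) := by
      have h1 := hz.smul_const v
      have h2 := hA.mapL (ContinuousLinearMap.apply ℂ H v)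
      have h3 := h1.sub h2
      have h4 : (fun k => (w k : ℂ) • (e k • v - Xi k v)) = fun k => ((w k : ℂ) * e k) • v
          - (ContinuousLinearMap.apply ℂ H v) ((w k : ℂ) • Xi k) := by
        funext k
        rw [smul_sub, smul_smul]
        rfl
      rw [h4]
      exact h3
    have hs2 : HasSum (fun k => (w (k + n) : ℂ) • (e (k + n) • v - Xi (k + n) v))
        (z • v - A v) := by
      have := (hasSum_nat_add_iff' (f := fun k => (w k : ℂ) • (e k • v - Xi k v)) n).2 hs
      rw [Finset.sum_eq_zero, sub_zero] at this
      · exact this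
      · intro k hk
        rw [hv, vv_eig Xi hXi e he n k (Finset.mem_range.1 hk)]
        simp
    have hws : Summable fun k => w (k + n) := (summable_nat_add_iff n).2 hw_sum
    have hb : ‖z • v - A v‖ ≤ (2 * ∑' k, w (k + n)) * ‖v‖ := by
      rw [← hs2.tsum_eq]
      refine tsum_of_norm_bounded ((hws.hasSum.mul_left 2).mul_right ‖v‖) ?_
      intro k
      rw [norm_smul]
      have h1 : ‖e (k + n) • v - Xi (k + n) v‖ ≤ 2 * ‖v‖ := by
        refine (norm_sub_le _ _).trans ?_
        rw [norm_smul, he1, Xi_norm_s8 _ _ (hXi _)]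
        linarith
      have h2 : ‖(w (k + n) : ℂ)‖ = w (k + n) := by
        rw [Complex.norm_real, Real.norm_of_nonneg (hw_pos _).le]
      rw [h2]
      nlinarith [mul_le_mul_of_nonneg_left h1 (hw_pos (k + n)).le]
    have hinv : v = B (z • v - A v) := by
      have h1 : (B * (algebraMap ℂ (H →L[ℂ] H) z - A)) = 1 := by
        rw [← hu, hB]; exact u.inv_mul
      have h2 := congrArg (fun T : H →L[ℂ] H => T v) h1
      simp only [mul_apply_eq_comp, one_apply_eq_self] at h2
      rw [← h2]
      congr 1
      rw [h2]
      simp [Algebra.algebraMap_eq_smul_one]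
    have h3 : ‖v‖ ≤ ‖B‖ * ((2 * ∑' k, w (k + n)) * ‖v‖) := by
      calc ‖v‖ = ‖B (z • v - A v)‖ := congrArg _ hinv
        _ ≤ ‖B‖ * ‖z • v - A v‖ := B.le_opNorm _
        _ ≤ _ := mul_le_mul_of_nonneg_left hb (norm_nonneg _)
    by_contra hc
    push Not at hc
    nlinarith
  have ht : Tendsto (fun n => ‖B‖ * (2 * ∑' k, w (k + n))) atTop (𝓝 (‖B‖ * (2 * 0))) :=
    ((tendsto_sum_nat_add w).const_mul 2).const_mul ‖B‖
  have := ge_of_tendsto' ht key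
  norm_num at this

/-- Theorem 3.4: `closure {2 μ_w(σ) - |w| : σ ⊆ ℕ} ⊆ spec(A_w) ⊆ [-|w|, |w|]`,
and if the weight `w` is ideal then `spec(A_w) = [-|w|, |w|]`. -/
theorem spectrum_A
    (w : ℕ → ℝ) (hw_pos : ∀ k, 0 < w k) (hw_sum : Summable w)
    (Xi : ℕ → H →L[ℂ] H)
    (hXi : ∀ k σ, Xi k (Z σ) = Z (symmDiff σ {k}))
    (A : H →L[ℂ] H) (hA : A = ∑' k, (w k : ℂ) • Xi k) :
    (Complex.ofReal ''
        closure {x : ℝ | ∃ s : Set ℕ, x = 2 * (∑' k : s, w k) - ∑' k, w k}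
      ⊆ spectrum ℂ A) ∧
    spectrum ℂ A ⊆ Complex.ofReal '' Set.Icc (-(∑' k, w k)) (∑' k, w k) ∧
    (closure {x : ℝ | ∃ s : Set ℕ, x = ∑' k : s, w k} = Set.Icc 0 (∑' k, w k) →
      spectrum ℂ A = Complex.ofReal '' Set.Icc (-(∑' k, w k)) (∑' k, w k)) := by
  have hnorm : ∀ k, ‖(w k : ℂ) • Xi k‖ ≤ w k := by
    intro k
    rw [norm_smul, Complex.norm_real, Real.norm_of_nonneg (hw_pos _).le]
    have : ‖Xi k‖ ≤ 1 := ContinuousLinearMap.opNorm_le_bound _ zero_le_one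
      (fun f => by rw [Xi_norm_s8 _ _ (hXi k), one_mul])
    nlinarith [hw_pos k]
  have hsum : Summable (fun k => (w k : ℂ) • Xi k) :=
    Summable.of_norm_bounded hw_sum hnorm
  have hAs : HasSum (fun k => (w k : ℂ) • Xi k) A := hA ▸ hsum.hasSum
  have hsa : IsSelfAdjoint A := by
    rw [hA]
    change star _ = _
    rw [tsum_star]
    congr 1
    ext1 k
    rw [star_smul, (Xi_symm _ _ (hXi k)).star_eq]
    simp
  have hAn : ‖A‖ ≤ ∑' k, w k := by
    rw [hA]
    exact tsum_of_norm_bounded hw_sum.hasSum hnorm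
  have h1 : Complex.ofReal ''
        closure {x : ℝ | ∃ s : Set ℕ, x = 2 * (∑' k : s, w k) - ∑' k, w k}
      ⊆ spectrum ℂ A := by
    refine (image_closure_subset_closure_image Complex.continuous_ofReal).trans ?_
    refine closure_minimal ?_ (spectrum.isClosed A)
    rintro _ ⟨x, ⟨s, rfl⟩, rfl⟩
    classical
    refine mem_spec w hw_pos hw_sum Xi hXi A hAs (fun k => if k ∈ s then 1 else -1) ?_ ?_ _ ?_
    · intro k; split_ifs <;> simp
    · intro k; split_ifs <;> simp
    · have h2 : HasSum (fun k => 2 * s.indicator w k - w k)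
          (2 * (∑' k : s, w k) - ∑' k, w k) := by
        rw [tsum_subtype s w]
        exact ((hw_sum.indicator s).hasSum.mul_left 2).sub hw_sum.hasSum
      have h3 := Complex.hasSum_ofReal.2 h2
      convert h3 using 2 with k
      by_cases hk : k ∈ s
      · simp [hk]; ring
      · simp [hk]
  have h2 : spectrum ℂ A ⊆ Complex.ofReal '' Set.Icc (-(∑' k, w k)) (∑' k, w k) := by
    intro z hz
    have hre := hsa.mem_spectrum_eq_re hz
    refine ⟨z.re, ?_, hre.symm⟩
    have := (spectrum.norm_le_norm_mul_of_mem hz).trans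
      ((mul_le_of_le_one_right (norm_nonneg A) ContinuousLinearMap.norm_id_le).trans hAn)
    exact abs_le.1 ((Complex.abs_re_le_norm z).trans this)
  refine ⟨h1, h2, fun hid => h2.antisymm (Set.Subset.trans ?_ h1)⟩
  refine Set.image_mono ?_
  intro x hx
  have hm : (x + ∑' k, w k) / 2 ∈ closure {x : ℝ | ∃ s : Set ℕ, x = ∑' k : s, w k} := by
    rw [hid]
    constructor
    · linarith [hx.1]
    · linarith [hx.2]
  have hc : Continuous (fun t : ℝ => 2 * t - ∑' k, w k) := by fun_prop
  have := map_mem_closure hc hm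
    (t := {x : ℝ | ∃ s : Set ℕ, x = 2 * (∑' k : s, w k) - ∑' k, w k})
    (by rintro _ ⟨s, rfl⟩; exact ⟨s, rfl⟩)
  convert this using 1
  ring
end
end
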